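/- arXiv:2407.11386 — 5 statements merged into one kernel-verified Lean document; each statement's English description precedes it below -/
import Mathlib

section
/- Let a < b be real numbers and let μ and ν be probability measures on ℝ such that for every t in the open interval (a,b), the integrals ∫ exp(-t·x) dμ(x) and ∫ exp(-t·x) dν(x) are both finite and equal. Then μ = ν. -/
/-!
At a point `s = -t` interior to the domain of the moment-generating function, `exp (s * x) • μ` is
a finite measure, whose characteristic function is the complex moment-generating function of `μ`
on the vertical line `re z = s`. The identity theorem carries equality of the two transforms from
real points accumulating at `s` to that whole line, so `exp (s * x) • μ = exp (s * x) • ν`, and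
the positive weight can be divided out. The weight is needed because `0` may lie outside the
domain, where the identity theorem says nothing about the characteristic functions of `μ` and `ν`
themselves.
-/

open MeasureTheory Real

open ProbabilityTheory Filter Topology

/-- The exponential tilt of `μ` by `f`, i.e. the measure with density `exp ∘ f`. Unlike
`MeasureTheory.Measure.tilted` it is not normalized, so that it can be inverted for measures of
any total mass. -/
noncomputable def expWeighted {Ω : Type*} [MeasurableSpace Ω] (μ : Measure Ω) (f : Ω → ℝ) :
    Measure Ω :=
  μ.withDensity fun ω ↦ ENNReal.ofReal (Real.exp (f ω))

section ExpWeighted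

variable {Ω : Type*} {mΩ : MeasurableSpace Ω} {μ : Measure Ω} {f X : Ω → ℝ}

lemma isFiniteMeasure_expWeighted (hf : Integrable (fun ω ↦ Real.exp (f ω)) μ) :
    IsFiniteMeasure (expWeighted μ f) :=
  isFiniteMeasure_withDensity_ofReal hf.hasFiniteIntegral

lemma expWeighted_expWeighted_neg (hf : AEMeasurable f μ) :
    expWeighted (expWeighted μ f) (-f) = μ := by
  have hinv : (fun ω ↦ ENNReal.ofReal (Real.exp ((-f) ω)))
      = (fun ω ↦ ENNReal.ofReal (Real.exp (f ω)))⁻¹ := by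
    ext ω
    simp [Real.exp_neg, ENNReal.ofReal_inv_of_pos (Real.exp_pos _)]
  rw [expWeighted, expWeighted, hinv]
  exact withDensity_inv_same₀ (by fun_prop) (ae_of_all _ fun ω ↦ by simp [Real.exp_pos])
    (ae_of_all _ fun ω ↦ ENNReal.ofReal_ne_top)

lemma integral_expWeighted {E : Type*} [NormedAddCommGroup E] [NormedSpace ℝ E]
    (hf : AEMeasurable f μ) (g : Ω → E) :
    ∫ ω, g ω ∂expWeighted μ f = ∫ ω, Real.exp (f ω) • g ω ∂μ := by
  rw [expWeighted, integral_withDensity_eq_integral_toReal_smul₀ (by fun_prop)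
    (ae_of_all _ fun _ ↦ ENNReal.ofReal_lt_top)]
  simp only [ENNReal.toReal_ofReal (Real.exp_nonneg _)]

lemma complexMGF_expWeighted (hX : AEMeasurable X μ) (s : ℝ) (z : ℂ) :
    complexMGF X (expWeighted μ fun ω ↦ s * X ω) z = complexMGF X μ (s + z) := by
  simp only [complexMGF, integral_expWeighted (hX.const_mul s), Complex.real_smul,
    Complex.ofReal_exp, Complex.ofReal_mul, ← Complex.exp_add, add_mul]

end ExpWeighted

lemma eqOn_complexMGF_of_frequently_mgf_eq {Ω Ω' : Type*} {mΩ : MeasurableSpace Ω}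
    {mΩ' : MeasurableSpace Ω'} {μ : Measure Ω} {ν : Measure Ω'} {X : Ω → ℝ} {Y : Ω' → ℝ} {s : ℝ}
    (hsX : s ∈ interior (integrableExpSet X μ)) (hsY : s ∈ interior (integrableExpSet Y ν))
    (heq : ∃ᶠ t in 𝓝[≠] s, mgf X μ t = mgf Y ν t) :
    Set.EqOn (complexMGF X μ) (complexMGF Y ν)
      {z | z.re ∈ interior (integrableExpSet X μ) ∩ interior (integrableExpSet Y ν)} := by
  have hconv : Convex ℝ (interior (integrableExpSet X μ) ∩ interior (integrableExpSet Y ν)) :=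
    convex_integrableExpSet.interior.inter convex_integrableExpSet.interior
  have hofReal : Tendsto ((↑) : ℝ → ℂ) (𝓝[≠] s) (𝓝[≠] (s : ℂ)) :=
    (hasDerivAt_id s).ofReal_comp.tendsto_nhdsNE (by simp)
  refine AnalyticOnNhd.eqOn_of_preconnected_of_frequently_eq
    (fun _ hz ↦ analyticAt_complexMGF hz.1) (fun _ hz ↦ analyticAt_complexMGF hz.2)
    (hconv.linear_preimage Complex.reLm).isPreconnected (z₀ := (s : ℂ)) ⟨hsX, hsY⟩ ?_
  exact hofReal.frequently (heq.mono fun t ht ↦ by simp only [complexMGF_ofReal, ht])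

lemma ext_of_frequently_mgf_id_eq {μ ν : Measure ℝ} {s : ℝ}
    (hμ : s ∈ interior (integrableExpSet id μ)) (hν : s ∈ interior (integrableExpSet id ν))
    (heq : ∃ᶠ t in 𝓝[≠] s, mgf id μ t = mgf id ν t) : μ = ν := by
  have hsμ : s ∈ integrableExpSet id μ := interior_subset hμ
  have : IsFiniteMeasure (expWeighted μ fun x ↦ s * id x) := isFiniteMeasure_expWeighted hsμ
  have hsν : s ∈ integrableExpSet id ν := interior_subset hν
  have : IsFiniteMeasure (expWeighted ν fun x ↦ s * id x) := isFiniteMeasure_expWeighted hsν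
  have hweighted : expWeighted μ (fun x ↦ s * id x) = expWeighted ν fun x ↦ s * id x := by
    refine Measure.ext_of_charFun (funext fun u ↦ ?_)
    rw [← complexMGF_id_mul_I, ← complexMGF_id_mul_I, complexMGF_expWeighted aemeasurable_id,
      complexMGF_expWeighted aemeasurable_id]
    exact eqOn_complexMGF_of_frequently_mgf_eq hμ hν heq (by simpa using ⟨hμ, hν⟩)
  rw [← expWeighted_expWeighted_neg (μ := μ) (aemeasurable_id.const_mul s), hweighted,
    expWeighted_expWeighted_neg (aemeasurable_id.const_mul s)]

section Laplace

variable {Ω : Type*} {mΩ : MeasurableSpace Ω} {μ : Measure Ω} {X : Ω → ℝ}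

lemma mem_integrableExpSet_iff_lintegral_ne_top (hX : AEMeasurable X μ) {t : ℝ} :
    t ∈ integrableExpSet X μ ↔ ∫⁻ ω, ENNReal.ofReal (Real.exp (t * X ω)) ∂μ ≠ ⊤ :=
  (lintegral_ofReal_ne_top_iff_integrable (by fun_prop)
    (ae_of_all _ fun _ ↦ Real.exp_nonneg _)).symm

lemma mgf_eq_toReal_lintegral (hX : AEMeasurable X μ) (t : ℝ) :
    mgf X μ t = (∫⁻ ω, ENNReal.ofReal (Real.exp (t * X ω)) ∂μ).toReal :=
  integral_eq_lintegral_of_nonneg_ae (ae_of_all _ fun _ ↦ Real.exp_nonneg _) (by fun_prop)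

lemma neg_mem_interior_integrableExpSet_of_eventually_lintegral_ne_top
    (hX : AEMeasurable X μ) {t₀ : ℝ}
    (hfin : ∀ᶠ t in 𝓝 t₀, ∫⁻ ω, ENNReal.ofReal (Real.exp (-t * X ω)) ∂μ ≠ ⊤) :
    -t₀ ∈ interior (integrableExpSet X μ) := by
  have hneg : Tendsto Neg.neg (𝓝 (-t₀)) (𝓝 t₀) := continuous_neg.tendsto' _ _ (neg_neg t₀)
  rw [mem_interior_iff_mem_nhds]
  filter_upwards [hneg.eventually hfin] with s hs
  rwa [mem_integrableExpSet_iff_lintegral_ne_top hX, ← neg_neg s]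

end Laplace

theorem laplace_transform_unique_general {μ ν : Measure ℝ} {t₀ : ℝ}
    (hμ : ∀ᶠ t in 𝓝 t₀, ∫⁻ x, ENNReal.ofReal (Real.exp (-t * x)) ∂μ ≠ ⊤)
    (hν : ∀ᶠ t in 𝓝 t₀, ∫⁻ x, ENNReal.ofReal (Real.exp (-t * x)) ∂ν ≠ ⊤)
    (heq : ∃ᶠ t in 𝓝[≠] t₀, ∫⁻ x, ENNReal.ofReal (Real.exp (-t * x)) ∂μ
      = ∫⁻ x, ENNReal.ofReal (Real.exp (-t * x)) ∂ν) :
    μ = ν := by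
  have hneg : Tendsto Neg.neg (𝓝[≠] t₀) (𝓝[≠] (-t₀)) :=
    (hasDerivAt_neg t₀).tendsto_nhdsNE (by simp)
  refine ext_of_frequently_mgf_id_eq
    (neg_mem_interior_integrableExpSet_of_eventually_lintegral_ne_top aemeasurable_id hμ)
    (neg_mem_interior_integrableExpSet_of_eventually_lintegral_ne_top aemeasurable_id hν)
    (hneg.frequently (heq.mono fun t ht ↦ ?_))
  simp only [mgf_eq_toReal_lintegral aemeasurable_id, id_eq, ht]

/-- If the two-sided Laplace transforms of two probability measures `μ` and `ν` on `ℝ`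
are finite and equal for all `t` in a nonempty open interval `(a, b)` (not necessarily
containing zero), then `μ = ν`. -/
theorem laplace_transform_unique (a b : ℝ) (hab : a < b)
    (μ ν : Measure ℝ) [IsProbabilityMeasure μ] [IsProbabilityMeasure ν]
    (hfin : ∀ t ∈ Set.Ioo a b, (∫⁻ x, ENNReal.ofReal (Real.exp (-t * x)) ∂μ) ≠ ⊤)
    (hfin' : ∀ t ∈ Set.Ioo a b, (∫⁻ x, ENNReal.ofReal (Real.exp (-t * x)) ∂ν) ≠ ⊤)
    (heq : ∀ t ∈ Set.Ioo a b,
      (∫⁻ x, ENNReal.ofReal (Real.exp (-t * x)) ∂μ)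
        = ∫⁻ x, ENNReal.ofReal (Real.exp (-t * x)) ∂ν) :
    μ = ν := by
  obtain ⟨t₀, ha, hb⟩ := exists_between hab
  have hnhds : Set.Ioo a b ∈ 𝓝 t₀ := Ioo_mem_nhds ha hb
  exact laplace_transform_unique_general (eventually_of_mem hnhds hfin)
    (eventually_of_mem hnhds hfin')
    (eventually_of_mem (mem_nhdsWithin_of_mem_nhds hnhds) heq).frequently
end

section
/- Let X be a real random variable on a probability space and let q > 0. The following three conditions are equivalent: (1) there exists K₁ > 0 such that for all t ≥ 0, P(|X| > t) ≤ 2·exp(-(t/K₁)^q); (2) there exists K₂ > 0 such that for all real p ≥ 1, (E[|X|^p])^{1/p} ≤ K₂·p^{1/q} (in particular E[|X|^p] < ∞); (3) there exists K₃ > 0 such that for all λ with 0 < λ ≤ 1/K₃, E[exp(λ^q·|X|^q)] ≤ exp(K₃^q·λ^q). -/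
open MeasureTheory Real

/-!
The substitution `Z = ‖X‖ ^ q` reduces the theorem to nonnegative variables with exponential tails:
it turns the parameters `K₁ ^ q`, `K₃ ^ q`, `λ ^ q`, `t ^ q` into free positive parameters and the
moment of order `p` of `X` into the moment of order `r = p / q` of `Z`, which has to be at most
`(C * r) ^ r` for `r ≥ 1 / q`. For `Z`, all conditions are compared with the finiteness of
`E exp (a * Z)` for some `a > 0`:

* an exponential tail of rate `b` makes it finite for `a < b`, by the layer-cake formula;
* it bounds the moments, because `z ^ r ≤ (r / a) ^ r * exp (a * z)`;
* it bounds the moment generating function near zero by interpolation,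
  `E exp (s * Z) ≤ (E exp (a * Z)) ^ (s / a)`.

Markov's inequality leads back to the tails. Applied to the moment of order `r` at the
level `e * C * r`, where the bound is `exp (-r)`, it needs `r` to grow linearly with the level;
levels too small for `r ≥ 1 / q` are absorbed by the factor `2`.
-/

open scoped ENNReal

section Exponential

variable {Ω : Type*} [MeasurableSpace Ω] {μ : Measure Ω} {Z : Ω → ℝ}

lemma lintegral_Ioi_exp_neg_mul {b : ℝ} (hb : 0 < b) :
    ∫⁻ s in Set.Ioi (0 : ℝ), ENNReal.ofReal (exp (-(b * s))) = ENNReal.ofReal b⁻¹ := by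
  have hint : IntegrableOn (fun s ↦ exp (-b * s)) (Set.Ioi 0) :=
    integrableOn_exp_mul_Ioi (neg_neg_of_pos hb) 0
  simp_rw [← neg_mul]
  rw [← ofReal_integral_eq_lintegral_ofReal hint (ae_of_all _ fun _ ↦ (exp_pos _).le),
    integral_exp_mul_Ioi (neg_neg_of_pos hb)]
  simp

lemma lintegral_exp_mul_eq_add_lintegral_measure_lt (hZ : AEMeasurable Z μ) (hZ₀ : 0 ≤ Z)
    {a : ℝ} (ha : 0 ≤ a) :
    ∫⁻ ω, ENNReal.ofReal (exp (a * Z ω)) ∂μ = μ Set.univ +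
      ∫⁻ s in Set.Ioi (0 : ℝ), μ {ω | s < Z ω} * ENNReal.ofReal (a * exp (a * s)) := by
  have hint (s : ℝ) : IntervalIntegrable (fun s ↦ a * exp (a * s)) volume 0 s :=
    Continuous.intervalIntegrable (by fun_prop) _ _
  have hFTC (z : ℝ) : ∫ s in (0 : ℝ)..z, a * exp (a * s) = exp (a * z) - 1 := by
    simp
  have hsplit (ω : Ω) : ENNReal.ofReal (exp (a * Z ω)) =
      1 + ENNReal.ofReal (∫ s in (0 : ℝ)..Z ω, a * exp (a * s)) := by
    rw [hFTC, ← ENNReal.ofReal_one, ← ENNReal.ofReal_add zero_le_one, add_sub_cancel]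
    exact sub_nonneg.2 (one_le_exp (mul_nonneg ha (hZ₀ ω)))
  simp_rw [hsplit]
  rw [lintegral_add_left measurable_const, lintegral_one,
    lintegral_comp_eq_lintegral_meas_lt_mul μ (ae_of_all _ hZ₀) hZ (fun s _ ↦ hint s)
      (ae_of_all _ fun s ↦ by positivity)]

lemma lintegral_exp_mul_le_of_measure_lt_le (hZ : AEMeasurable Z μ) (hZ₀ : 0 ≤ Z) {a b : ℝ}
    (ha : 0 ≤ a) (hab : a < b) {A : ℝ≥0∞}
    (h : ∀ s > 0, μ {ω | s < Z ω} ≤ A * ENNReal.ofReal (exp (-(b * s)))) :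
    ∫⁻ ω, ENNReal.ofReal (exp (a * Z ω)) ∂μ ≤ μ Set.univ + A * ENNReal.ofReal (a / (b - a)) := by
  have hpt {s : ℝ} (hs : 0 < s) : μ {ω | s < Z ω} * ENNReal.ofReal (a * exp (a * s)) ≤
      A * ENNReal.ofReal a * ENNReal.ofReal (exp (-((b - a) * s))) := by
    calc _ ≤ A * ENNReal.ofReal (exp (-(b * s))) * ENNReal.ofReal (a * exp (a * s)) := by
          gcongr
          exact h s hs
      _ = A * ENNReal.ofReal a * ENNReal.ofReal (exp (-((b - a) * s))) := by
          rw [mul_assoc, mul_assoc, ← ENNReal.ofReal_mul (exp_pos _).le, ← ENNReal.ofReal_mul ha,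
            mul_left_comm, ← exp_add]
          ring_nf
  rw [lintegral_exp_mul_eq_add_lintegral_measure_lt hZ hZ₀ ha]
  gcongr
  calc ∫⁻ s in Set.Ioi (0 : ℝ), μ {ω | s < Z ω} * ENNReal.ofReal (a * exp (a * s))
      ≤ ∫⁻ s in Set.Ioi (0 : ℝ), A * ENNReal.ofReal a * ENNReal.ofReal (exp (-((b - a) * s))) :=
        setLIntegral_mono' measurableSet_Ioi fun _ hs ↦ hpt hs
    _ = A * ENNReal.ofReal a * ENNReal.ofReal (b - a)⁻¹ := by
        rw [lintegral_const_mul _ (by fun_prop), lintegral_Ioi_exp_neg_mul (sub_pos.2 hab)]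
    _ = A * ENNReal.ofReal (a / (b - a)) := by
        rw [mul_assoc, ← ENNReal.ofReal_mul ha, div_eq_mul_inv]

lemma lintegral_rpow_le_mul_lintegral_exp_mul (hZ₀ : 0 ≤ Z) {a r : ℝ} (ha : 0 < a) (hr : 0 ≤ r) :
    ∫⁻ ω, ENNReal.ofReal (Z ω ^ r) ∂μ ≤
      ENNReal.ofReal ((r / a) ^ r) * ∫⁻ ω, ENNReal.ofReal (exp (a * Z ω)) ∂μ := by
  rw [← lintegral_const_mul' _ _ ENNReal.ofReal_ne_top]
  refine lintegral_mono fun ω ↦ ?_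
  rw [← ENNReal.ofReal_mul (by positivity)]
  gcongr
  simpa only [abs_of_nonneg (hZ₀ ω), abs_of_pos ha] using
    ProbabilityTheory.rpow_abs_le_mul_exp_abs (Z ω) hr ha.ne'

lemma lintegral_exp_mul_le_rpow [IsProbabilityMeasure μ] (hZ : AEMeasurable Z μ) {a s : ℝ}
    (ha : 0 < a) (hs : 0 ≤ s) (hsa : s ≤ a) :
    ∫⁻ ω, ENNReal.ofReal (exp (s * Z ω)) ∂μ ≤
      (∫⁻ ω, ENNReal.ofReal (exp (a * Z ω)) ∂μ) ^ (s / a) := by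
  have hpow (ω : Ω) : ENNReal.ofReal (exp (a * Z ω)) ^ (s / a) =
      ENNReal.ofReal (exp (s * Z ω)) := by
    rw [ENNReal.ofReal_rpow_of_pos (exp_pos _), ← exp_mul]
    congr 2
    field_simp
  -- Hölder's inequality against the constant function `1`
  have hHolder := ENNReal.lintegral_mul_norm_pow_le (μ := μ)
    (f := fun ω ↦ ENNReal.ofReal (exp (a * Z ω))) (g := 1) (by fun_prop) aemeasurable_one
    (div_nonneg hs ha.le) (sub_nonneg.2 ((div_le_one ha).2 hsa)) (add_sub_cancel _ _)
  simpa [hpow] using hHolder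

lemma measure_lt_le_lintegral_exp_mul (hZ : AEMeasurable Z μ) {a : ℝ} (ha : 0 ≤ a) (s : ℝ) :
    μ {ω | s < Z ω} ≤
      (∫⁻ ω, ENNReal.ofReal (exp (a * Z ω)) ∂μ) * ENNReal.ofReal (exp (-(a * s))) := by
  calc μ {ω | s < Z ω}
      ≤ μ {ω | ENNReal.ofReal (exp (a * s)) ≤ ENNReal.ofReal (exp (a * Z ω))} :=
        measure_mono fun ω (hω : s < Z ω) ↦
          ENNReal.ofReal_le_ofReal (exp_le_exp.2 (mul_le_mul_of_nonneg_left hω.le ha))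
    _ ≤ (∫⁻ ω, ENNReal.ofReal (exp (a * Z ω)) ∂μ) / ENNReal.ofReal (exp (a * s)) :=
        meas_ge_le_lintegral_div (by fun_prop) (by simp [exp_pos]) ENNReal.ofReal_ne_top
    _ = (∫⁻ ω, ENNReal.ofReal (exp (a * Z ω)) ∂μ) * ENNReal.ofReal (exp (-(a * s))) := by
        rw [div_eq_mul_inv, ← ENNReal.ofReal_inv_of_pos (exp_pos _), exp_neg]

lemma measure_lt_le_lintegral_rpow_div (hZ : AEMeasurable Z μ) {s r : ℝ} (hs : 0 < s)
    (hr : 0 ≤ r) :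
    μ {ω | s < Z ω} ≤ (∫⁻ ω, ENNReal.ofReal (Z ω ^ r) ∂μ) / ENNReal.ofReal (s ^ r) := by
  calc μ {ω | s < Z ω}
      ≤ μ {ω | ENNReal.ofReal (s ^ r) ≤ ENNReal.ofReal (Z ω ^ r)} :=
        measure_mono fun ω (hω : s < Z ω) ↦
          ENNReal.ofReal_le_ofReal (rpow_le_rpow hs.le hω.le hr)
    _ ≤ (∫⁻ ω, ENNReal.ofReal (Z ω ^ r) ∂μ) / ENNReal.ofReal (s ^ r) :=
        meas_ge_le_lintegral_div (by fun_prop) (by simpa using rpow_pos_of_pos hs r)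
          ENNReal.ofReal_ne_top

lemma measure_lt_le_exp_neg_of_lintegral_rpow_le (hZ : AEMeasurable Z μ) {C r : ℝ} (hC : 0 < C)
    (hr : 0 < r) (h : ∫⁻ ω, ENNReal.ofReal (Z ω ^ r) ∂μ ≤ ENNReal.ofReal ((C * r) ^ r)) :
    μ {ω | exp 1 * (C * r) < Z ω} ≤ ENNReal.ofReal (exp (-r)) := by
  have hCr : 0 < (C * r) ^ r := by positivity
  calc μ {ω | exp 1 * (C * r) < Z ω}
      ≤ (∫⁻ ω, ENNReal.ofReal (Z ω ^ r) ∂μ) / ENNReal.ofReal ((exp 1 * (C * r)) ^ r) :=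
        measure_lt_le_lintegral_rpow_div hZ (by positivity) hr.le
    _ ≤ ENNReal.ofReal ((C * r) ^ r) / ENNReal.ofReal ((exp 1 * (C * r)) ^ r) := by gcongr
    _ = ENNReal.ofReal (exp (-r)) := by
        rw [← ENNReal.ofReal_div_of_pos (by positivity), mul_rpow (exp_pos 1).le (by positivity),
          exp_one_rpow, div_mul_cancel_right₀ hCr.ne', exp_neg]

lemma one_le_two_mul_exp_neg {x : ℝ} (hx : x ≤ log 2) : 1 ≤ 2 * exp (-x) := by
  have := exp_le_exp.2 (neg_le_neg hx)
  rw [exp_neg, exp_log two_pos] at this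
  linarith

lemma exists_measure_lt_le_two_mul_exp_of_lintegral_rpow_le [IsProbabilityMeasure μ]
    (hZ : AEMeasurable Z μ) {r₀ : ℝ} (hr₀ : 0 < r₀) {C : ℝ} (hC : 0 < C)
    (h : ∀ r ≥ r₀, ∫⁻ ω, ENNReal.ofReal (Z ω ^ r) ∂μ ≤ ENNReal.ofReal ((C * r) ^ r)) :
    ∃ K > (0 : ℝ), ∀ s ≥ (0 : ℝ), μ {ω | s < Z ω} ≤ ENNReal.ofReal (2 * exp (-(s / K))) := by
  set D := exp 1 * C
  have hD : 0 < D := by positivity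
  refine ⟨max D (D * r₀ / log 2), by positivity, fun s hs ↦ ?_⟩
  rcases le_total (D * r₀) s with hlarge | hsmall
  · have hr : r₀ ≤ s / D := (le_div_iff₀' hD).2 hlarge
    have hlevel : exp 1 * (C * (s / D)) = s := by rw [← mul_assoc]; exact mul_div_cancel₀ s hD.ne'
    have htail :=
      measure_lt_le_exp_neg_of_lintegral_rpow_le hZ hC (hr₀.trans_le hr) (h _ hr)
    rw [hlevel] at htail
    refine htail.trans (ENNReal.ofReal_le_ofReal ?_)
    calc exp (-(s / D)) ≤ exp (-(s / max D (D * r₀ / log 2))) := by gcongr; exact le_max_left _ _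
      _ ≤ 2 * exp (-(s / max D (D * r₀ / log 2))) := le_mul_of_one_le_left (exp_pos _).le one_le_two
  · refine prob_le_one.trans (ENNReal.one_le_ofReal.2 (one_le_two_mul_exp_neg ?_))
    calc s / max D (D * r₀ / log 2) ≤ D * r₀ / (D * r₀ / log 2) := by
          gcongr
          exact le_max_right _ _
      _ = log 2 := by field_simp

lemma exists_one_le_le_ofReal {x : ℝ≥0∞} (hx : x ≠ ∞) : ∃ M ≥ (1 : ℝ), x ≤ ENNReal.ofReal M :=
  ⟨max 1 x.toReal, le_max_left _ _,
    (ENNReal.le_ofReal_iff_toReal_le hx (by positivity)).2 (le_max_right _ _)⟩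

lemma exists_lintegral_rpow_le_of_lintegral_exp_mul_ne_top (hZ₀ : 0 ≤ Z) {r₀ : ℝ} (hr₀ : 0 < r₀)
    {a : ℝ} (ha : 0 < a) (h : ∫⁻ ω, ENNReal.ofReal (exp (a * Z ω)) ∂μ ≠ ∞) :
    ∃ C > (0 : ℝ), ∀ r ≥ r₀,
      ∫⁻ ω, ENNReal.ofReal (Z ω ^ r) ∂μ ≤ ENNReal.ofReal ((C * r) ^ r) := by
  obtain ⟨M, hM_one, hM⟩ := exists_one_le_le_ofReal h
  refine ⟨M ^ r₀⁻¹ / a, by positivity, fun r hr ↦ ?_⟩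
  have hr_pos : 0 < r := hr₀.trans_le hr
  have hMr : M ≤ (M ^ r₀⁻¹) ^ r := by
    calc M = (M ^ r₀⁻¹) ^ r₀ := (rpow_inv_rpow (by positivity) hr₀.ne').symm
      _ ≤ (M ^ r₀⁻¹) ^ r := by
          gcongr
          exact one_le_rpow hM_one (by positivity)
  calc ∫⁻ ω, ENNReal.ofReal (Z ω ^ r) ∂μ
      ≤ ENNReal.ofReal ((r / a) ^ r) * ENNReal.ofReal M :=
        (lintegral_rpow_le_mul_lintegral_exp_mul hZ₀ ha hr_pos.le).trans (by gcongr)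
    _ = ENNReal.ofReal ((r / a) ^ r * M) := (ENNReal.ofReal_mul (by positivity)).symm
    _ ≤ ENNReal.ofReal ((r / a) ^ r * (M ^ r₀⁻¹) ^ r) := by gcongr
    _ = ENNReal.ofReal ((M ^ r₀⁻¹ / a * r) ^ r) := by
        rw [← mul_rpow (by positivity) (by positivity)]
        ring_nf

lemma exists_lintegral_exp_mul_le_exp_of_ne_top [IsProbabilityMeasure μ]
    (hZ : AEMeasurable Z μ) {a : ℝ} (ha : 0 < a)
    (h : ∫⁻ ω, ENNReal.ofReal (exp (a * Z ω)) ∂μ ≠ ∞) :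
    ∃ K > (0 : ℝ), ∀ s > (0 : ℝ), s ≤ 1 / K →
      ∫⁻ ω, ENNReal.ofReal (exp (s * Z ω)) ∂μ ≤ ENNReal.ofReal (exp (K * s)) := by
  obtain ⟨M, hM_one, hM⟩ := exists_one_le_le_ofReal h
  have hM_pos : 0 < M := one_pos.trans_le hM_one
  refine ⟨max (1 / a) (log M / a), by positivity, fun s hs hsK ↦ ?_⟩
  have hsa : s ≤ a := by
    simpa using hsK.trans (one_div_le_one_div_of_le (by positivity) (le_max_left _ _))
  calc ∫⁻ ω, ENNReal.ofReal (exp (s * Z ω)) ∂μ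
      ≤ (∫⁻ ω, ENNReal.ofReal (exp (a * Z ω)) ∂μ) ^ (s / a) :=
        lintegral_exp_mul_le_rpow hZ ha hs.le hsa
    _ ≤ ENNReal.ofReal M ^ (s / a) := by gcongr
    _ = ENNReal.ofReal (exp (log M / a * s)) := by
        rw [ENNReal.ofReal_rpow_of_pos hM_pos, rpow_def_of_pos hM_pos]
        ring_nf
    _ ≤ ENNReal.ofReal (exp (max (1 / a) (log M / a) * s)) := by
        gcongr
        exact le_max_right _ _

lemma exists_measure_lt_le_two_mul_exp_of_lintegral_exp_mul_le (hZ : AEMeasurable Z μ)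
    {K : ℝ} (hK : 0 < K) (h : ∀ s > (0 : ℝ), s ≤ 1 / K →
      ∫⁻ ω, ENNReal.ofReal (exp (s * Z ω)) ∂μ ≤ ENNReal.ofReal (exp (K * s))) :
    ∃ L > (0 : ℝ), ∀ s ≥ (0 : ℝ), μ {ω | s < Z ω} ≤ ENNReal.ofReal (2 * exp (-(s / L))) := by
  have hlog : log 2 ≤ 1 := (log_le_sub_one_of_pos two_pos).trans_eq (by norm_num)
  have htwo : ∫⁻ ω, ENNReal.ofReal (exp (log 2 / K * Z ω)) ∂μ ≤ ENNReal.ofReal 2 := by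
    simpa only [mul_div_cancel₀ _ hK.ne', exp_log two_pos] using
      h (log 2 / K) (by positivity) (by gcongr)
  refine ⟨K / log 2, by positivity, fun s _ ↦ ?_⟩
  calc μ {ω | s < Z ω}
      ≤ ENNReal.ofReal 2 * ENNReal.ofReal (exp (-(log 2 / K * s))) :=
        (measure_lt_le_lintegral_exp_mul hZ (by positivity) s).trans (mul_le_mul_left htwo _)
    _ = ENNReal.ofReal (2 * exp (-(s / (K / log 2)))) := by
        rw [← ENNReal.ofReal_mul zero_le_two]
        congr 4
        field_simp

theorem subexponential_tfae [IsProbabilityMeasure μ] (hZ : AEMeasurable Z μ) (hZ₀ : 0 ≤ Z) {r₀ : ℝ}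
    (hr₀ : 0 < r₀) :
    List.TFAE
      [ ∃ K > (0 : ℝ), ∀ s ≥ (0 : ℝ), μ {ω | s < Z ω} ≤ ENNReal.ofReal (2 * exp (-(s / K))),
        ∃ C > (0 : ℝ), ∀ r ≥ r₀,
          ∫⁻ ω, ENNReal.ofReal (Z ω ^ r) ∂μ ≤ ENNReal.ofReal ((C * r) ^ r),
        ∃ K > (0 : ℝ), ∀ s > (0 : ℝ), s ≤ 1 / K →
          ∫⁻ ω, ENNReal.ofReal (exp (s * Z ω)) ∂μ ≤ ENNReal.ofReal (exp (K * s)),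
        ∃ a > (0 : ℝ), ∫⁻ ω, ENNReal.ofReal (exp (a * Z ω)) ∂μ ≠ ∞ ] := by
  tfae_have 1 → 4 := by
    rintro ⟨K, hK, h⟩
    have htail (s : ℝ) (hs : s > 0) :
        μ {ω | s < Z ω} ≤ 2 * ENNReal.ofReal (exp (-(1 / K * s))) := by
      simpa [ENNReal.ofReal_mul, div_eq_inv_mul] using h s hs.le
    refine ⟨1 / K / 2, by positivity, ne_top_of_le_ne_top ?_ <|
      lintegral_exp_mul_le_of_measure_lt_le hZ hZ₀ (by positivity) (half_lt_self (by positivity))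
        htail⟩
    finiteness
  tfae_have 4 → 2 := fun ⟨_, ha, h⟩ ↦
    exists_lintegral_rpow_le_of_lintegral_exp_mul_ne_top hZ₀ hr₀ ha h
  tfae_have 4 → 3 := fun ⟨_, ha, h⟩ ↦ exists_lintegral_exp_mul_le_exp_of_ne_top hZ ha h
  tfae_have 2 → 1 := fun ⟨_, hC, h⟩ ↦
    exists_measure_lt_le_two_mul_exp_of_lintegral_rpow_le hZ hr₀ hC h
  tfae_have 3 → 1 := fun ⟨_, hK, h⟩ ↦
    exists_measure_lt_le_two_mul_exp_of_lintegral_exp_mul_le hZ hK h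
  tfae_finish

end Exponential

section Substitution

lemma exists_pos_rpow_iff {q : ℝ} (hq : q ≠ 0) {p : ℝ → Prop} :
    (∃ x > (0 : ℝ), p (x ^ q)) ↔ ∃ x > (0 : ℝ), p x := by
  refine ⟨fun ⟨x, hx, h⟩ ↦ ⟨x ^ q, rpow_pos_of_pos hx q, h⟩, fun ⟨x, hx, h⟩ ↦
    ⟨x ^ q⁻¹, rpow_pos_of_pos hx _, ?_⟩⟩
  rwa [rpow_inv_rpow hx.le hq]

lemma forall_pos_rpow_iff {q : ℝ} (hq : q ≠ 0) {p : ℝ → Prop} :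
    (∀ x > (0 : ℝ), p (x ^ q)) ↔ ∀ x > (0 : ℝ), p x := by
  simpa using (exists_pos_rpow_iff hq (p := fun x ↦ ¬ p x)).not

lemma forall_nonneg_rpow_iff {q : ℝ} (hq : q ≠ 0) {p : ℝ → Prop} :
    (∀ x ≥ (0 : ℝ), p (x ^ q)) ↔ ∀ x ≥ (0 : ℝ), p x := by
  refine ⟨fun h x hx ↦ ?_, fun h x hx ↦ h _ (rpow_nonneg hx q)⟩
  simpa only [rpow_inv_rpow hx hq] using h (x ^ q⁻¹) (rpow_nonneg hx _)

variable {Ω E : Type*} [MeasurableSpace Ω] [SeminormedAddGroup E] {μ : Measure Ω} {X : Ω → E}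
  {q : ℝ}

lemma exists_measure_norm_gt_le_iff (hq : 0 < q) :
    (∃ K > (0 : ℝ), ∀ t ≥ (0 : ℝ),
        μ {ω | ‖X ω‖ > t} ≤ ENNReal.ofReal (2 * exp (-(t / K) ^ q))) ↔
      ∃ K > (0 : ℝ), ∀ s ≥ (0 : ℝ),
        μ {ω | s < ‖X ω‖ ^ q} ≤ ENNReal.ofReal (2 * exp (-(s / K))) := by
  refine Iff.trans ?_ (exists_pos_rpow_iff hq.ne')
  refine exists_congr fun K ↦ and_congr_right fun hK ↦ ?_
  refine Iff.trans ?_ (forall_nonneg_rpow_iff hq.ne')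
  refine forall₂_congr fun t ht ↦ ?_
  simp only [gt_iff_lt, rpow_lt_rpow_iff ht (norm_nonneg _) hq, div_rpow ht hK.le]

lemma lintegral_norm_rpow_one_div_le_iff (hq : 0 < q) {K p : ℝ} (hK : 0 < K) (hp : 0 < p) :
    (∫⁻ ω, ENNReal.ofReal (‖X ω‖ ^ p) ∂μ) ^ (1 / p) ≤ ENNReal.ofReal (K * p ^ (1 / q)) ↔
      ∫⁻ ω, ENNReal.ofReal ((‖X ω‖ ^ q) ^ (p / q)) ∂μ ≤
        ENNReal.ofReal ((q * K ^ q * (p / q)) ^ (p / q)) := by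
  have hnorm (ω : Ω) : (‖X ω‖ ^ q) ^ (p / q) = ‖X ω‖ ^ p := by
    rw [← rpow_mul (norm_nonneg _), mul_div_cancel₀ _ hq.ne']
  have hbound : (q * K ^ q * (p / q)) ^ (p / q) = (K * p ^ (1 / q)) ^ p := by
    calc (q * K ^ q * (p / q)) ^ (p / q) = (K ^ q * p) ^ (p / q) := by congr 1; field_simp
      _ = (K ^ q) ^ (p / q) * p ^ (p / q) := mul_rpow (by positivity) hp.le
      _ = K ^ p * (p ^ (1 / q)) ^ p := by
          rw [← rpow_mul hK.le, ← rpow_mul hp.le, mul_div_cancel₀ _ hq.ne', one_div_mul_eq_div]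
      _ = (K * p ^ (1 / q)) ^ p := (mul_rpow hK.le (by positivity)).symm
  simp_rw [hnorm]
  rw [hbound, ← ENNReal.ofReal_rpow_of_nonneg (by positivity) hp.le, one_div,
    ENNReal.rpow_inv_le_iff hp]

lemma exists_lintegral_norm_rpow_le_iff (hq : 0 < q) :
    (∃ K > (0 : ℝ), ∀ p ≥ (1 : ℝ),
        (∫⁻ ω, ENNReal.ofReal (‖X ω‖ ^ p) ∂μ) ^ (1 / p) ≤ ENNReal.ofReal (K * p ^ (1 / q))) ↔
      ∃ C > (0 : ℝ), ∀ r ≥ 1 / q,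
        ∫⁻ ω, ENNReal.ofReal ((‖X ω‖ ^ q) ^ r) ∂μ ≤ ENNReal.ofReal ((C * r) ^ r) := by
  constructor
  · rintro ⟨K, hK, h⟩
    refine ⟨q * K ^ q, by positivity, fun r hr ↦ ?_⟩
    have hqr : 1 ≤ q * r := (div_le_iff₀' hq).1 hr
    simpa only [mul_div_cancel_left₀ r hq.ne'] using
      (lintegral_norm_rpow_one_div_le_iff hq hK (one_pos.trans_le hqr)).1 (h (q * r) hqr)
  · rintro ⟨C, hC, h⟩
    refine ⟨(C / q) ^ q⁻¹, by positivity, fun p hp ↦ ?_⟩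
    rw [lintegral_norm_rpow_one_div_le_iff hq (by positivity) (one_pos.trans_le hp),
      rpow_inv_rpow (by positivity) hq.ne', mul_div_cancel₀ _ hq.ne']
    exact h (p / q) (by gcongr)

lemma exists_lintegral_exp_norm_rpow_le_iff (hq : 0 < q) :
    (∃ K > (0 : ℝ), ∀ lam : ℝ, 0 < lam → lam ≤ 1 / K →
        ∫⁻ ω, ENNReal.ofReal (exp (lam ^ q * ‖X ω‖ ^ q)) ∂μ ≤
          ENNReal.ofReal (exp (K ^ q * lam ^ q))) ↔
      ∃ K > (0 : ℝ), ∀ s > (0 : ℝ), s ≤ 1 / K →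
        ∫⁻ ω, ENNReal.ofReal (exp (s * ‖X ω‖ ^ q)) ∂μ ≤ ENNReal.ofReal (exp (K * s)) := by
  refine Iff.trans ?_ (exists_pos_rpow_iff hq.ne')
  refine exists_congr fun K ↦ and_congr_right fun hK ↦ ?_
  refine Iff.trans ?_ (forall_pos_rpow_iff hq.ne')
  refine forall₂_congr fun lam hlam ↦ imp_congr_left ?_
  rw [← rpow_le_rpow_iff hlam.le (by positivity) hq, div_rpow zero_le_one hK.le, one_rpow]

end Substitution

theorem subweibull_characterizations_general {Ω E : Type*} [MeasurableSpace Ω]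
    [SeminormedAddCommGroup E] {P : Measure Ω} [IsProbabilityMeasure P] {X : Ω → E}
    (hX : AEStronglyMeasurable X P) {q : ℝ} (hq : 0 < q) :
    List.TFAE
      [ ∃ K₁ > (0 : ℝ), ∀ t ≥ (0 : ℝ),
          P {ω | ‖X ω‖ > t} ≤ ENNReal.ofReal (2 * exp (-(t / K₁) ^ q)),
        ∃ K₂ > (0 : ℝ), ∀ p ≥ (1 : ℝ),
          (∫⁻ ω, ENNReal.ofReal (‖X ω‖ ^ p) ∂P) ^ (1 / p) ≤ ENNReal.ofReal (K₂ * p ^ (1 / q)),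
        ∃ K₃ > (0 : ℝ), ∀ lam : ℝ, 0 < lam → lam ≤ 1 / K₃ →
          ∫⁻ ω, ENNReal.ofReal (exp (lam ^ q * ‖X ω‖ ^ q)) ∂P ≤
            ENNReal.ofReal (exp (K₃ ^ q * lam ^ q)) ] := by
  have hZ : AEMeasurable (fun ω ↦ ‖X ω‖ ^ q) P := hX.norm.aemeasurable.pow_const q
  have htfae := subexponential_tfae hZ (fun ω ↦ by positivity) (one_div_pos.2 hq)
  rw [exists_measure_norm_gt_le_iff hq, exists_lintegral_norm_rpow_le_iff hq,
    exists_lintegral_exp_norm_rpow_le_iff hq]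
  tfae_have 1 ↔ 2 := htfae.out 0 1
  tfae_have 1 ↔ 3 := htfae.out 0 2
  tfae_finish

/-- Equivalent characterizations of q-subweibull random variables:
(1) tail bound, (2) growth rate of absolute moments, (3) MGF bound for `|X|^q`
in an interval around zero. -/
theorem subweibull_characterizations {Ω : Type*} [MeasurableSpace Ω]
    (P : Measure Ω) [IsProbabilityMeasure P] (X : Ω → ℝ) (hX : Measurable X)
    (q : ℝ) (hq : 0 < q) :
    List.TFAE
      [ ∃ K₁ > (0 : ℝ), ∀ t ≥ (0 : ℝ),
          P {ω | |X ω| > t} ≤ ENNReal.ofReal (2 * Real.exp (-(t / K₁) ^ q)),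
        ∃ K₂ > (0 : ℝ), ∀ p ≥ (1 : ℝ),
          (∫⁻ ω, ENNReal.ofReal (|X ω| ^ p) ∂P) ^ (1 / p)
            ≤ ENNReal.ofReal (K₂ * p ^ (1 / q)),
        ∃ K₃ > (0 : ℝ), ∀ lam : ℝ, 0 < lam → lam ≤ 1 / K₃ →
          (∫⁻ ω, ENNReal.ofReal (Real.exp (lam ^ q * |X ω| ^ q)) ∂P)
            ≤ ENNReal.ofReal (Real.exp (K₃ ^ q * lam ^ q)) ] :=
  subweibull_characterizations_general hX.aestronglyMeasurable hq
end

section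
/- Let X be a real random variable on a probability space and let q > 0. Then there exists λ > 0 with E[exp(λ^q·|X|^q)] < ∞ if and only if limsup_{p→∞} (E[|X|^p])^{1/p} / p^{1/q} < ∞, where the limsup is taken as the real parameter p → ∞ and is valued in [0,∞] (moments E[|X|^p] being allowed to be infinite). -/
open MeasureTheory Real Filter

/-!
With `Y = |X|^q`, both sides are equivalent to a bound `E[Y^s] ≤ (c s)^s` for all large `s`.
If `E[exp(a Y)]` is finite, the bound follows by integrating `Y^s ≤ (s/a)^s exp(a Y)`. Conversely,
the bound at integers `s = n` controls the `n`-th term of `E[exp(a Y)] = ∑ aⁿ E[Yⁿ] / n!` by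
`(a c e)ⁿ`, because `nⁿ ≤ n! eⁿ`, so the series converges once `a c e < 1`.
-/

open scoped ENNReal

lemma limsup_lt_top_iff_eventually_le_ofReal {ι : Type*} {l : Filter ι} {u : ι → ℝ≥0∞} :
    limsup u l < ⊤ ↔ ∃ K > (0 : ℝ), ∀ᶠ i in l, u i ≤ ENNReal.ofReal K := by
  constructor
  · intro h
    obtain ⟨b, hb, hb_top⟩ := exists_between h
    refine ⟨b.toReal, ENNReal.toReal_pos hb.ne_bot hb_top.ne, ?_⟩
    filter_upwards [eventually_lt_of_limsup_lt hb] with i hi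
    exact hi.le.trans_eq (ENNReal.ofReal_toReal hb_top.ne).symm
  · rintro ⟨K, -, hK⟩
    exact (limsup_le_of_le (by isBoundedDefault) hK).trans_lt ENNReal.ofReal_lt_top

lemma rpow_one_div_div_le_ofReal_iff {m : ℝ≥0∞} {q s K : ℝ} (hq : 0 < q) (hs : 0 < s)
    (hK : 0 ≤ K) :
    m ^ (1 / (q * s)) / ENNReal.ofReal ((q * s) ^ (1 / q)) ≤ ENNReal.ofReal K ↔
      m ≤ ENNReal.ofReal ((K ^ q * q * s) ^ s) := by
  have hqs : 0 < q * s := mul_pos hq hs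
  have hroot : 0 < (q * s) ^ (1 / q) := rpow_pos_of_pos hqs _
  have hpow : (K * (q * s) ^ (1 / q)) ^ (q * s) = (K ^ q * q * s) ^ s := by
    rw [rpow_mul (by positivity), mul_rpow hK hroot.le, one_div, rpow_inv_rpow hqs.le hq.ne',
      mul_assoc]
  rw [ENNReal.div_le_iff (by simpa using hroot) ENNReal.ofReal_ne_top, ← ENNReal.ofReal_mul hK,
    one_div (q * s), ENNReal.rpow_inv_le_iff hqs,
    ENNReal.ofReal_rpow_of_nonneg (by positivity) hqs.le, hpow]

lemma limsup_rpow_one_div_div_lt_top_iff {m : ℝ → ℝ≥0∞} {q : ℝ} (hq : 0 < q) :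
    limsup (fun p : ℝ => m p ^ (1 / p) / ENNReal.ofReal (p ^ (1 / q))) atTop < ⊤ ↔
      ∃ c > (0 : ℝ), ∀ᶠ s in atTop, m (q * s) ≤ ENNReal.ofReal ((c * s) ^ s) := by
  have hratio {K : ℝ} (hK : 0 < K) :
      (∀ᶠ p in atTop, m p ^ (1 / p) / ENNReal.ofReal (p ^ (1 / q)) ≤ ENNReal.ofReal K) ↔
        ∀ᶠ s in atTop, m (q * s) ≤ ENNReal.ofReal ((K ^ q * q * s) ^ s) := by
    conv_lhs => rw [← (OrderIso.mulLeft₀ q hq).map_atTop, eventually_map]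
    refine eventually_congr ?_
    filter_upwards [eventually_gt_atTop 0] with s hs
    exact rpow_one_div_div_le_ofReal_iff hq hs hK.le
  rw [limsup_lt_top_iff_eventually_le_ofReal]
  constructor
  · rintro ⟨K, hK, h⟩
    exact ⟨K ^ q * q, by positivity, (hratio hK).1 h⟩
  · rintro ⟨c, hc, h⟩
    refine ⟨(c / q) ^ q⁻¹, by positivity, (hratio (by positivity)).2 ?_⟩
    rwa [rpow_inv_rpow (by positivity) hq.ne', div_mul_cancel₀ c hq.ne']

lemma tsum_lt_top_of_eventually_le {ι : Type*} {u v : ι → ℝ≥0∞} (hu : ∀ i, u i ≠ ⊤)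
    (huv : ∀ᶠ i in cofinite, u i ≤ v i) (hv : ∑' i, v i ≠ ⊤) : ∑' i, u i < ⊤ := by
  have hsummable : Summable fun i => (u i).toReal := by
    refine (ENNReal.summable_toReal hv).of_norm_bounded_eventually ?_
    filter_upwards [huv] with i hi
    rw [norm_of_nonneg ENNReal.toReal_nonneg]
    exact ENNReal.toReal_mono (ENNReal.ne_top_of_tsum_ne_top hv i) hi
  simpa only [ENNReal.ofReal_toReal (hu _)] using hsummable.tsum_ofReal_lt_top

lemma pow_div_factorial_mul_pow_le {a b : ℝ} (ha : 0 ≤ a) (hb : 0 ≤ b) (n : ℕ) :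
    a ^ n / n.factorial * (b * n) ^ n ≤ (a * b * exp 1) ^ n :=
  calc a ^ n / n.factorial * (b * n) ^ n = (a * b) ^ n * ((n : ℝ) ^ n / n.factorial) := by ring
    _ ≤ (a * b) ^ n * exp n := by
        gcongr
        exact pow_div_factorial_le_exp _ n.cast_nonneg n
    _ = (a * b * exp 1) ^ n := by rw [mul_pow _ (exp 1), exp_one_pow]

section ExponentialMoment

variable {α : Type*} [MeasurableSpace α] {μ : Measure α} {g : α → ℝ}

lemma lintegral_rpow_le_mul_lintegral_exp (hg : ∀ x, 0 ≤ g x) {a s : ℝ} (ha : 0 < a)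
    (hs : 0 ≤ s) :
    ∫⁻ x, ENNReal.ofReal (g x ^ s) ∂μ ≤
      ENNReal.ofReal ((s / a) ^ s) * ∫⁻ x, ENNReal.ofReal (exp (a * g x)) ∂μ := by
  rw [← lintegral_const_mul' _ _ ENNReal.ofReal_ne_top]
  refine lintegral_mono fun x => ?_
  rw [← ENNReal.ofReal_mul (by positivity)]
  have hexp := ProbabilityTheory.rpow_abs_le_mul_exp_abs (g x) hs ha.ne'
  rw [abs_of_nonneg (hg x), abs_of_pos ha] at hexp
  exact ENNReal.ofReal_le_ofReal hexp

theorem exists_eventually_lintegral_rpow_le (hg : ∀ x, 0 ≤ g x) {a : ℝ} (ha : 0 < a)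
    (hexp : ∫⁻ x, ENNReal.ofReal (exp (a * g x)) ∂μ < ⊤) :
    ∃ c > (0 : ℝ), ∀ᶠ s in atTop,
      ∫⁻ x, ENNReal.ofReal (g x ^ s) ∂μ ≤ ENNReal.ofReal ((c * s) ^ s) := by
  set M : ℝ := max 1 (∫⁻ x, ENNReal.ofReal (exp (a * g x)) ∂μ).toReal
  have hM : 1 ≤ M := le_max_left _ _
  refine ⟨M / a, by positivity, ?_⟩
  filter_upwards [eventually_ge_atTop 1] with s hs
  have hs0 : 0 ≤ s := zero_le_one.trans hs
  calc ∫⁻ x, ENNReal.ofReal (g x ^ s) ∂μ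
      ≤ ENNReal.ofReal ((s / a) ^ s) * ∫⁻ x, ENNReal.ofReal (exp (a * g x)) ∂μ :=
        lintegral_rpow_le_mul_lintegral_exp hg ha hs0
    _ ≤ ENNReal.ofReal ((s / a) ^ s) * ENNReal.ofReal (M ^ s) := by
        gcongr
        exact (ENNReal.le_ofReal_iff_toReal_le hexp.ne (by positivity)).2
          ((le_max_right _ _).trans (self_le_rpow_of_one_le hM hs))
    _ = ENNReal.ofReal ((M / a * s) ^ s) := by
        rw [← ENNReal.ofReal_mul (by positivity), ← mul_rpow (by positivity) (by positivity),
          div_mul_comm]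

lemma lintegral_exp_mul_eq_tsum (hg : ∀ x, 0 ≤ g x) (hgm : AEMeasurable g μ) {a : ℝ}
    (ha : 0 ≤ a) :
    ∫⁻ x, ENNReal.ofReal (exp (a * g x)) ∂μ =
      ∑' n : ℕ, ENNReal.ofReal (a ^ n / n.factorial) * ∫⁻ x, ENNReal.ofReal (g x ^ n) ∂μ := by
  have hseries (x : α) : ENNReal.ofReal (exp (a * g x)) =
      ∑' n : ℕ, ENNReal.ofReal (a ^ n / n.factorial) * ENNReal.ofReal (g x ^ n) := by
    have hag : 0 ≤ a * g x := mul_nonneg ha (hg x)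
    rw [exp_eq_exp_ℝ, NormedSpace.exp_eq_tsum_div, ENNReal.ofReal_tsum_of_nonneg
      (fun n => by positivity) (summable_pow_div_factorial _)]
    refine tsum_congr fun n => ?_
    rw [← ENNReal.ofReal_mul (by positivity), mul_pow, div_mul_eq_mul_div]
  simp_rw [hseries]
  rw [lintegral_tsum fun n => by fun_prop]
  exact tsum_congr fun n => lintegral_const_mul' _ _ ENNReal.ofReal_ne_top

lemma lintegral_pow_lt_top_of_le [IsFiniteMeasure μ] (hg : ∀ x, 0 ≤ g x) {m n : ℕ} (hmn : m ≤ n)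
    (hn : ∫⁻ x, ENNReal.ofReal (g x ^ n) ∂μ < ⊤) :
    ∫⁻ x, ENNReal.ofReal (g x ^ m) ∂μ < ⊤ := by
  have hpow (x : α) : g x ^ m ≤ 1 + g x ^ n := by
    rcases le_total (g x) 1 with hx | hx
    · exact (pow_le_one₀ (hg x) hx).trans (le_add_of_nonneg_right (pow_nonneg (hg x) n))
    · exact (pow_le_pow_right₀ hx hmn).trans (le_add_of_nonneg_left zero_le_one)
  calc ∫⁻ x, ENNReal.ofReal (g x ^ m) ∂μ
      ≤ ∫⁻ x, (1 + ENNReal.ofReal (g x ^ n)) ∂μ := lintegral_mono fun x =>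
        (ENNReal.ofReal_le_ofReal (hpow x)).trans (ENNReal.ofReal_add_le.trans_eq (by simp))
    _ = μ Set.univ + ∫⁻ x, ENNReal.ofReal (g x ^ n) ∂μ := by
        rw [lintegral_add_left measurable_const, lintegral_one]
    _ < ⊤ := ENNReal.add_lt_top.2 ⟨measure_lt_top μ _, hn⟩

theorem lintegral_exp_mul_lt_top_of_eventually_lintegral_pow_le [IsFiniteMeasure μ]
    (hg : ∀ x, 0 ≤ g x) (hgm : AEMeasurable g μ) {a b : ℝ} (ha : 0 ≤ a) (hb : 0 ≤ b)
    (hab : a * b * exp 1 < 1)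
    (hmom : ∀ᶠ n : ℕ in atTop,
      ∫⁻ x, ENNReal.ofReal (g x ^ n) ∂μ ≤ ENNReal.ofReal ((b * n) ^ n)) :
    ∫⁻ x, ENNReal.ofReal (exp (a * g x)) ∂μ < ⊤ := by
  have hfinite (m : ℕ) : ∫⁻ x, ENNReal.ofReal (g x ^ m) ∂μ < ⊤ := by
    obtain ⟨n, hn, hmn⟩ := (hmom.and (eventually_ge_atTop m)).exists
    exact lintegral_pow_lt_top_of_le hg hmn (hn.trans_lt ENNReal.ofReal_lt_top)
  have hgeometric : Summable fun n : ℕ => (a * b * exp 1) ^ n :=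
    summable_geometric_of_lt_one (by positivity) hab
  rw [lintegral_exp_mul_eq_tsum hg hgm ha]
  refine tsum_lt_top_of_eventually_le
    (fun n => ENNReal.mul_ne_top ENNReal.ofReal_ne_top (hfinite n).ne) ?_
    hgeometric.tsum_ofReal_ne_top
  rw [Nat.cofinite_eq_atTop]
  filter_upwards [hmom] with n hn
  calc ENNReal.ofReal (a ^ n / n.factorial) * ∫⁻ x, ENNReal.ofReal (g x ^ n) ∂μ
      ≤ ENNReal.ofReal (a ^ n / n.factorial) * ENNReal.ofReal ((b * n) ^ n) := by gcongr
    _ = ENNReal.ofReal (a ^ n / n.factorial * (b * n) ^ n) :=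
        (ENNReal.ofReal_mul (by positivity)).symm
    _ ≤ ENNReal.ofReal ((a * b * exp 1) ^ n) :=
        ENNReal.ofReal_le_ofReal (pow_div_factorial_mul_pow_le ha hb n)

theorem exists_lintegral_exp_mul_lt_top_iff [IsFiniteMeasure μ] (hg : ∀ x, 0 ≤ g x)
    (hgm : AEMeasurable g μ) :
    (∃ a > (0 : ℝ), ∫⁻ x, ENNReal.ofReal (exp (a * g x)) ∂μ < ⊤) ↔
      ∃ c > (0 : ℝ), ∀ᶠ s in atTop,
        ∫⁻ x, ENNReal.ofReal (g x ^ s) ∂μ ≤ ENNReal.ofReal ((c * s) ^ s) := by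
  refine ⟨fun ⟨a, ha, h⟩ => exists_eventually_lintegral_rpow_le hg ha h, fun ⟨c, hc, h⟩ => ?_⟩
  refine ⟨(2 * c * exp 1)⁻¹, by positivity,
    lintegral_exp_mul_lt_top_of_eventually_lintegral_pow_le hg hgm (by positivity) hc.le ?_ ?_⟩
  · field_simp
    norm_num
  · simpa only [rpow_natCast] using tendsto_natCast_atTop_atTop.eventually h

end ExponentialMoment

theorem subweibull_iff_moment_limsup_general {α E : Type*} [MeasurableSpace α]
    [SeminormedAddCommGroup E] (μ : Measure α) [IsFiniteMeasure μ] (f : α → E)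
    (hf : AEStronglyMeasurable f μ) (q : ℝ) (hq : 0 < q) :
    (∃ lam > (0 : ℝ), ∫⁻ x, ENNReal.ofReal (exp (lam ^ q * ‖f x‖ ^ q)) ∂μ < ⊤) ↔
      limsup (fun p : ℝ => (∫⁻ x, ENNReal.ofReal (‖f x‖ ^ p) ∂μ) ^ (1 / p)
        / ENNReal.ofReal (p ^ (1 / q))) atTop < ⊤ := by
  have hscale : (∃ lam > (0 : ℝ), ∫⁻ x, ENNReal.ofReal (exp (lam ^ q * ‖f x‖ ^ q)) ∂μ < ⊤) ↔
      ∃ a > (0 : ℝ), ∫⁻ x, ENNReal.ofReal (exp (a * ‖f x‖ ^ q)) ∂μ < ⊤ := by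
    refine ⟨fun ⟨lam, hlam, h⟩ => ⟨lam ^ q, rpow_pos_of_pos hlam q, h⟩,
      fun ⟨a, ha, h⟩ => ⟨a ^ q⁻¹, rpow_pos_of_pos ha _, ?_⟩⟩
    rwa [rpow_inv_rpow ha.le hq.ne']
  rw [hscale, limsup_rpow_one_div_div_lt_top_iff hq, exists_lintegral_exp_mul_lt_top_iff
    (fun x => rpow_nonneg (norm_nonneg _) q) (hf.norm.aemeasurable.pow_const q)]
  simp only [rpow_mul (norm_nonneg _)]

/-- A real random variable is q-subweibull iff
`limsup_{p → ∞} (E[|X|^p])^{1/p} / p^{1/q} < ∞`, the limsup being taken over real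
`p → ∞` with values in `[0,∞]`. -/
theorem subweibull_iff_moment_limsup {Ω : Type*} [MeasurableSpace Ω]
    (P : Measure Ω) [IsProbabilityMeasure P] (X : Ω → ℝ) (hX : Measurable X)
    (q : ℝ) (hq : 0 < q) :
    (∃ lam > (0 : ℝ),
        (∫⁻ ω, ENNReal.ofReal (Real.exp (lam ^ q * |X ω| ^ q)) ∂P) < ⊤) ↔
      Filter.limsup
        (fun p : ℝ =>
          ((∫⁻ ω, ENNReal.ofReal (|X ω| ^ p) ∂P) ^ (1 / p))
            / ENNReal.ofReal (p ^ (1 / q)))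
        Filter.atTop < ⊤ :=
  subweibull_iff_moment_limsup_general P X hX.aestronglyMeasurable q hq
end

section
/- Let q > 1, let μ be a probability measure on ℝ with μ([0,∞)) = 1, and suppose the set {λ > 0 : ∫ exp(λ^q·x^q) dμ(x) < ∞} is nonempty; let R = sSup of this set in [0,∞]. Let θ ∈ ℝ (note ∫ exp(θ·x) dμ(x) < ∞ holds automatically) and let ν be the exponentially tilted measure with density x ↦ exp(θ·x)/∫ exp(θ·y) dμ(y) with respect to μ. Then for every λ with 0 ≤ λ < R, ∫ exp(λ^q·x^q) dν(x) < ∞. -/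
/-!
A linear functional grows more slowly than `‖x‖ ^ q` when `q > 1`: by Young's inequality it is at
most `c * ‖x‖ ^ q + C` for every `c > 0`. If `lam < b` and the moment at `b` is finite, the choice
`c = b ^ q - lam ^ q` absorbs the tilt into the gap between `lam` and `b`.
-/

open MeasureTheory Real

section Exp

variable {α : Type*} [MeasurableSpace α] {μ : Measure α} {f g : α → ℝ}

lemma lintegral_exp_lt_top_of_le_add_const {C : ℝ} (hfg : ∀ᵐ x ∂μ, f x ≤ g x + C)
    (hg : ∫⁻ x, ENNReal.ofReal (exp (g x)) ∂μ < ⊤) :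
    ∫⁻ x, ENNReal.ofReal (exp (f x)) ∂μ < ⊤ := by
  calc
    ∫⁻ x, ENNReal.ofReal (exp (f x)) ∂μ
      ≤ ∫⁻ x, ENNReal.ofReal (exp (g x)) * ENNReal.ofReal (exp C) ∂μ := by
        refine lintegral_mono_ae ?_
        filter_upwards [hfg] with x hx
        rw [← ENNReal.ofReal_mul (exp_pos _).le, ← exp_add]
        gcongr
    _ = (∫⁻ x, ENNReal.ofReal (exp (g x)) ∂μ) * ENNReal.ofReal (exp C) :=
        lintegral_mul_const' _ _ ENNReal.ofReal_ne_top
    _ < ⊤ := ENNReal.mul_lt_top hg ENNReal.ofReal_lt_top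

lemma lintegral_exp_tilted_lt_top
    (h : ∫⁻ x, ENNReal.ofReal (exp (f x + g x)) ∂μ < ⊤) :
    ∫⁻ x, ENNReal.ofReal (exp (g x)) ∂(μ.tilted f) < ⊤ := by
  set Z := ∫ x, exp (f x) ∂μ
  have density_mul (x : α) : ENNReal.ofReal (exp (f x) / Z) * ENNReal.ofReal (exp (g x)) =
      ENNReal.ofReal (exp (f x + g x)) * ENNReal.ofReal Z⁻¹ := by
    rw [← ENNReal.ofReal_mul' (exp_pos _).le, ← ENNReal.ofReal_mul (exp_pos _).le, exp_add]
    ring_nf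
  rw [lintegral_tilted]
  simp only [Z, density_mul]
  rw [lintegral_mul_const' _ _ ENNReal.ofReal_ne_top]
  exact ENNReal.mul_lt_top h ENNReal.ofReal_lt_top

end Exp

lemma exists_mul_le_mul_abs_rpow_add {q c : ℝ} (hq : 1 < q) (hc : 0 < c) (a : ℝ) :
    ∃ C : ℝ, ∀ x : ℝ, a * x ≤ c * |x| ^ q + C := by
  have hq0 : 0 < q := one_pos.trans hq
  have hpq := (HolderConjugate.conjExponent hq).symm
  -- Young's inequality for `(a / k) * (k * x)`, with `k ^ q / q = c`.
  set k := (c * q) ^ q⁻¹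
  have hk : 0 < k := by positivity
  have hkq : k ^ q = c * q := rpow_inv_rpow (by positivity) hq0.ne'
  refine ⟨|a / k| ^ q.conjExponent / q.conjExponent, fun x => ?_⟩
  calc
    a * x = a / k * (k * x) := by field_simp
    _ ≤ |a / k| ^ q.conjExponent / q.conjExponent + |k * x| ^ q / q :=
        young_inequality _ _ hpq
    _ = c * |x| ^ q + |a / k| ^ q.conjExponent / q.conjExponent := by
        rw [abs_mul, abs_of_pos hk, mul_rpow hk.le (abs_nonneg x), hkq]
        field_simp
        ring

lemma exists_apply_le_mul_norm_rpow_add {E : Type*} [SeminormedAddCommGroup E]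
    [NormedSpace ℝ E] {q c : ℝ} (hq : 1 < q) (hc : 0 < c) (L : StrongDual ℝ E) :
    ∃ C : ℝ, ∀ x, L x ≤ c * ‖x‖ ^ q + C := by
  obtain ⟨C, hC⟩ := exists_mul_le_mul_abs_rpow_add hq hc ‖L‖
  refine ⟨C, fun x => ?_⟩
  calc
    L x ≤ ‖L‖ * ‖x‖ := (le_abs_self _).trans (L.le_opNorm x)
    _ ≤ c * ‖x‖ ^ q + C := by simpa only [abs_norm] using hC ‖x‖

section ExpPowMoment

variable {E : Type*} [SeminormedAddCommGroup E] [MeasurableSpace E]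

/-- The subweibull moment `∫ exp (lam ^ q * ‖x‖ ^ q) dμ` of order `q` at scale `lam`, as a lower
Lebesgue integral so that divergence is the value `⊤`. -/
noncomputable def expPowMoment (q : ℝ) (μ : Measure E) (lam : ℝ) : ENNReal :=
  ∫⁻ x, ENNReal.ofReal (exp (lam ^ q * ‖x‖ ^ q)) ∂μ

/-- The radius of convergence `R_q` of `μ`, the supremum in `[0, ∞]` of the positive scales with
finite subweibull moment; it is `0` when there are none. -/
noncomputable def expPowRadius (q : ℝ) (μ : Measure E) : ENNReal :=
  sSup (ENNReal.ofReal '' {lam : ℝ | 0 < lam ∧ expPowMoment q μ lam < ⊤})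

lemma expPowMoment_of_ae_nonneg {μ : Measure ℝ} (hμ : ∀ᵐ x ∂μ, 0 ≤ x) (q lam : ℝ) :
    expPowMoment q μ lam = ∫⁻ x, ENNReal.ofReal (exp (lam ^ q * x ^ q)) ∂μ :=
  lintegral_congr_ae <| hμ.mono fun x hx => by simp only [norm_of_nonneg hx]

lemma exists_lt_expPowMoment_lt_top {q lam : ℝ} {μ : Measure E}
    (hlt : ENNReal.ofReal lam < expPowRadius q μ) :
    ∃ b, lam < b ∧ expPowMoment q μ b < ⊤ := by
  obtain ⟨_, ⟨b, ⟨hb, hfin⟩, rfl⟩, hlamb⟩ := lt_sSup_iff.mp hlt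
  exact ⟨b, (ENNReal.ofReal_lt_ofReal_iff hb).mp hlamb, hfin⟩

variable [NormedSpace ℝ E]

lemma lintegral_exp_apply_add_lt_top {q lam : ℝ} (hq : 1 < q) {μ : Measure E}
    (L : StrongDual ℝ E) (hlam : 0 ≤ lam) (hlt : ENNReal.ofReal lam < expPowRadius q μ) :
    ∫⁻ x, ENNReal.ofReal (exp (L x + lam ^ q * ‖x‖ ^ q)) ∂μ < ⊤ := by
  obtain ⟨b, hlamb, hfin⟩ := exists_lt_expPowMoment_lt_top hlt
  have hgap : 0 < b ^ q - lam ^ q :=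
    sub_pos.mpr (rpow_lt_rpow hlam hlamb (one_pos.trans hq))
  obtain ⟨C, hC⟩ := exists_apply_le_mul_norm_rpow_add hq hgap L
  refine lintegral_exp_lt_top_of_le_add_const (C := C) (.of_forall fun x => ?_) hfin
  linarith [hC x]

lemma integrable_exp_apply [OpensMeasurableSpace E] {q : ℝ} (hq : 1 < q) {μ : Measure E}
    (L : StrongDual ℝ E) (hR : 0 < expPowRadius q μ) :
    Integrable (fun x => exp (L x)) μ := by
  have hmeas : AEStronglyMeasurable (fun x => exp (L x)) μ :=
    (measurable_exp.comp L.continuous.measurable).aestronglyMeasurable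
  have hfin := lintegral_exp_apply_add_lt_top hq L le_rfl (by rwa [ENNReal.ofReal_zero])
  simp only [zero_rpow (one_pos.trans hq).ne', zero_mul, add_zero] at hfin
  exact (lintegral_ofReal_ne_top_iff_integrable hmeas
    (.of_forall fun x => (exp_pos (L x)).le)).mp hfin.ne

theorem tilted_subweibull_nonneg_lt_general [OpensMeasurableSpace E] {q lam : ℝ} (hq : 1 < q)
    {μ : Measure E} (L : StrongDual ℝ E) (hlam : 0 ≤ lam)
    (hlt : ENNReal.ofReal lam < expPowRadius q μ) :
    Integrable (fun x => exp (L x)) μ ∧ expPowMoment q (μ.tilted L) lam < ⊤ :=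
  ⟨integrable_exp_apply hq L (bot_le.trans_lt hlt),
    lintegral_exp_tilted_lt_top (lintegral_exp_apply_add_lt_top hq L hlam hlt)⟩

end ExpPowMoment

/-- Preservation of nonnegative subweibull tails under exponential tilting, finiteness
part: if `μ` is concentrated on `[0,∞)`, is q-subweibull (`q > 1`) with radius of
convergence `R`, then for any tilting parameter `θ` the tilted measure has finite
subweibull moment for every `0 ≤ λ < R`. -/
theorem tilted_subweibull_nonneg_lt (q : ℝ) (hq : 1 < q)
    (μ : Measure ℝ) [IsProbabilityMeasure μ] (hpos : μ (Set.Ici (0 : ℝ)) = 1)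
    (hne : {lam : ℝ | 0 < lam ∧
      (∫⁻ x, ENNReal.ofReal (Real.exp (lam ^ q * x ^ q)) ∂μ) < ⊤}.Nonempty)
    (θ : ℝ) :
    ∀ lam : ℝ, 0 ≤ lam →
      ENNReal.ofReal lam
          < sSup (ENNReal.ofReal '' {lam' : ℝ | 0 < lam' ∧
              (∫⁻ x, ENNReal.ofReal (Real.exp (lam' ^ q * x ^ q)) ∂μ) < ⊤}) →
      (∫⁻ x, ENNReal.ofReal (Real.exp (lam ^ q * x ^ q))
          ∂(μ.tilted (fun x => θ * x))) < ⊤ := by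
  intro lam hlam hlt
  have hμ : ∀ᵐ x ∂μ, 0 ≤ x := (mem_ae_iff_prob_eq_one measurableSet_Ici).mpr hpos
  simp only [← expPowMoment_of_ae_nonneg hμ,
    ← expPowMoment_of_ae_nonneg ((tilted_absolutelyContinuous μ _).ae_le hμ)] at hlt ⊢
  exact (tilted_subweibull_nonneg_lt_general hq (.mul ℝ ℝ θ) hlam hlt).2
end

section
/- Let q > 1, let μ be a probability measure on ℝ, and suppose the set {λ > 0 : ∫ exp(λ^q·|x|^q) dμ(x) < ∞} is nonempty (μ is q-subweibull); let R = sSup of this set in [0,∞]. Let θ ∈ ℝ (note ∫ exp(θ·x) dμ(x) < ∞ holds automatically) and let ν be the exponentially tilted measure with density x ↦ exp(θ·x)/∫ exp(θ·y) dμ(y) with respect to μ. Then ν is q-subweibull with the same radius of convergence: for every λ with 0 ≤ λ < R, ∫ exp(λ^q·|z|^q) dν(z) < ∞, and for every real λ > R, ∫ exp(λ^q·|z|^q) dν(z) = ∞. -/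
open MeasureTheory Real

/-!
For `q > 1`, Young's inequality bounds `θ * x` by `ε * |x| ^ q + C` for every `ε > 0`. Hence the
tilting factor `exp (θ * x)` is absorbed, up to a multiplicative constant, by an arbitrarily small
increase of `lam` in `exp (lam ^ q * |x| ^ q)`, so tilting cannot decrease the radius of
convergence. Neither can it increase it, since multiplying the tilted measure by `exp (-θ * x)`
recovers a positive multiple of the original one.
-/

open scoped ENNReal

section Growth

variable {E : Type*} [SeminormedAddCommGroup E] {q : ℝ} {f : E → ℝ}

/-- `f` is negligible against `‖x‖ ^ q`: every positive multiple of `‖x‖ ^ q` dominates `|f x|` up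
to an additive constant. This is the class of log-densities that do not affect `q`-subweibull
tails. -/
def HasSubRpowGrowth (q : ℝ) (f : E → ℝ) : Prop :=
  ∀ ε > 0, ∃ C, ∀ x, |f x| ≤ ε * ‖x‖ ^ q + C

lemma HasSubRpowGrowth.neg (hf : HasSubRpowGrowth q f) :
    HasSubRpowGrowth q (fun x => -f x) := by
  simpa only [HasSubRpowGrowth, abs_neg] using hf

lemma exists_mul_le_mul_rpow_add (hq : 1 < q) (K : ℝ) {ε : ℝ} (hε : 0 < ε) :
    ∃ C, ∀ t, 0 ≤ t → K * t ≤ ε * t ^ q + C := by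
  have hq₀ : 0 < q := one_pos.trans hq
  -- Scaling `t` by `δ` turns the Young term `(δ * t) ^ q / q` into `ε * t ^ q`.
  set δ := (q * ε) ^ q⁻¹
  have hδ : 0 < δ := by positivity
  have hδq : δ ^ q = q * ε := rpow_inv_rpow (by positivity) hq₀.ne'
  refine ⟨(|K| / δ) ^ q.conjExponent / q.conjExponent, fun t ht => ?_⟩
  calc K * t ≤ |K| * t := mul_le_mul_of_nonneg_right (le_abs_self K) ht
    _ = (|K| / δ) * (δ * t) := by field_simp
    _ ≤ (|K| / δ) ^ q.conjExponent / q.conjExponent + (δ * t) ^ q / q :=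
      young_inequality_of_nonneg (by positivity) (by positivity)
        (HolderConjugate.conjExponent hq).symm
    _ = ε * t ^ q + (|K| / δ) ^ q.conjExponent / q.conjExponent := by
      rw [mul_rpow hδ.le ht, hδq]
      field_simp
      ring

lemma hasSubRpowGrowth_of_abs_le_mul_norm (hq : 1 < q) {K : ℝ} (hf : ∀ x, |f x| ≤ K * ‖x‖) :
    HasSubRpowGrowth q f := by
  intro ε hε
  obtain ⟨C, hC⟩ := exists_mul_le_mul_rpow_add hq K hε
  exact ⟨C, fun x => (hf x).trans (hC ‖x‖ (norm_nonneg x))⟩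

variable [MeasurableSpace E] {μ : Measure E}

lemma HasSubRpowGrowth.lintegral_exp_add_lt_top (hf : HasSubRpowGrowth q f) {s t : ℝ} (hst : s < t)
    (ht : ∫⁻ x, ENNReal.ofReal (exp (t * ‖x‖ ^ q)) ∂μ < ⊤) :
    ∫⁻ x, ENNReal.ofReal (exp (f x + s * ‖x‖ ^ q)) ∂μ < ⊤ := by
  obtain ⟨C, hC⟩ := hf (t - s) (sub_pos.2 hst)
  have exponent_le (x : E) : f x + s * ‖x‖ ^ q ≤ C + t * ‖x‖ ^ q := by
    linarith [le_abs_self (f x), hC x]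
  calc ∫⁻ x, ENNReal.ofReal (exp (f x + s * ‖x‖ ^ q)) ∂μ
      ≤ ∫⁻ x, ENNReal.ofReal (exp C) * ENNReal.ofReal (exp (t * ‖x‖ ^ q)) ∂μ := by
        gcongr with x
        rw [← ENNReal.ofReal_mul (exp_nonneg C), ← exp_add]
        exact ENNReal.ofReal_le_ofReal (exp_le_exp.2 (exponent_le x))
    _ = ENNReal.ofReal (exp C) * ∫⁻ x, ENNReal.ofReal (exp (t * ‖x‖ ^ q)) ∂μ :=
        lintegral_const_mul' _ _ ENNReal.ofReal_ne_top
    _ < ⊤ := ENNReal.mul_lt_top ENNReal.ofReal_lt_top ht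

end Growth

lemma lintegral_exp_tilted {α : Type*} [MeasurableSpace α] (μ : Measure α) (f g : α → ℝ) :
    ∫⁻ x, ENNReal.ofReal (exp (g x)) ∂(μ.tilted f) =
      ENNReal.ofReal (∫ x, exp (f x) ∂μ)⁻¹ * ∫⁻ x, ENNReal.ofReal (exp (f x + g x)) ∂μ := by
  rw [lintegral_tilted, ← lintegral_const_mul' _ _ ENNReal.ofReal_ne_top]
  congr with x
  rw [← ENNReal.ofReal_mul (by positivity), ← ENNReal.ofReal_mul (by positivity), exp_add]
  congr 1
  ring

section Subweibull

variable {E : Type*} [SeminormedAddCommGroup E] [MeasurableSpace E] {q : ℝ} {f : E → ℝ}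
  {μ ν : Measure E}

/-- The `q`-subweibull moment `∫ exp (lam ^ q * ‖x‖ ^ q) dμ(x)`, a value of `[0, ∞]`. -/
noncomputable def subweibullMoment (q lam : ℝ) (μ : Measure E) : ℝ≥0∞ :=
  ∫⁻ x, ENNReal.ofReal (exp (lam ^ q * ‖x‖ ^ q)) ∂μ

/-- The radius of convergence `R_q` of `μ`, the supremum in `[0, ∞]` of the positive reals at which
the `q`-subweibull moment is finite; it is `0` when there are none. -/
noncomputable def subweibullRadius (q : ℝ) (μ : Measure E) : ℝ≥0∞ :=
  sSup (ENNReal.ofReal '' {lam : ℝ | 0 < lam ∧ subweibullMoment q lam μ < ⊤})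

lemma subweibullMoment_mono (hq : 0 ≤ q) {a b : ℝ} (ha : 0 ≤ a) (hab : a ≤ b) :
    subweibullMoment q a μ ≤ subweibullMoment q b μ := by
  unfold subweibullMoment
  gcongr

lemma subweibullMoment_lt_top_of_lt_radius (hq : 0 ≤ q) {lam : ℝ} (hlam : 0 ≤ lam)
    (h : ENNReal.ofReal lam < subweibullRadius q μ) : subweibullMoment q lam μ < ⊤ := by
  obtain ⟨_, ⟨b, ⟨hb₀, hb⟩, rfl⟩, hlt⟩ := lt_sSup_iff.1 h
  have hle : lam ≤ b := ((ENNReal.ofReal_lt_ofReal_iff hb₀).1 hlt).le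
  exact (subweibullMoment_mono hq hlam hle).trans_lt hb

lemma subweibullMoment_eq_top_of_radius_lt {lam : ℝ}
    (h : subweibullRadius q μ < ENNReal.ofReal lam) : subweibullMoment q lam μ = ⊤ := by
  have hlam : 0 < lam := ENNReal.ofReal_pos.1 (bot_le.trans_lt h)
  by_contra hfin
  exact h.not_ge (le_sSup ⟨lam, ⟨hlam, lt_top_iff_ne_top.2 hfin⟩, rfl⟩)

lemma subweibullRadius_le_of_moment_lt_top
    (h : ∀ ⦃a b : ℝ⦄, 0 < a → a < b → subweibullMoment q b μ < ⊤ → subweibullMoment q a ν < ⊤) :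
    subweibullRadius q μ ≤ subweibullRadius q ν := by
  refine sSup_le ?_
  rintro _ ⟨b, ⟨-, hb⟩, rfl⟩
  by_contra! hlt
  obtain ⟨c, hνc, hcb⟩ := exists_between hlt
  have hc : c ≠ ⊤ := hcb.ne_top
  have hc₀ : 0 < c.toReal := ENNReal.toReal_pos (bot_le.trans_lt hνc).ne' hc
  have hfin : subweibullMoment q c.toReal ν < ⊤ :=
    h hc₀ ((ENNReal.lt_ofReal_iff_toReal_lt hc).1 hcb) hb
  exact hνc.not_ge (le_sSup ⟨c.toReal, ⟨hc₀, hfin⟩, ENNReal.ofReal_toReal hc⟩)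

lemma HasSubRpowGrowth.integrable_exp (hf : HasSubRpowGrowth q f)
    (hfm : AEStronglyMeasurable f μ) {lam : ℝ} (hlam : 0 < lam)
    (h : subweibullMoment q lam μ < ⊤) : Integrable (fun x => exp (f x)) μ := by
  refine ⟨continuous_exp.comp_aestronglyMeasurable hfm, ?_⟩
  rw [hasFiniteIntegral_iff_ofReal (ae_of_all _ fun x => exp_nonneg (f x))]
  simpa only [zero_mul, add_zero] using hf.lintegral_exp_add_lt_top (rpow_pos_of_pos hlam q) h

lemma HasSubRpowGrowth.subweibullMoment_tilted_lt_top (hf : HasSubRpowGrowth q f) (hq : 0 < q)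
    {a b : ℝ} (ha : 0 ≤ a) (hab : a < b) (hb : subweibullMoment q b μ < ⊤) :
    subweibullMoment q a (μ.tilted f) < ⊤ := by
  rw [subweibullMoment, lintegral_exp_tilted]
  exact ENNReal.mul_lt_top ENNReal.ofReal_lt_top
    (hf.lintegral_exp_add_lt_top (rpow_lt_rpow ha hab hq) hb)

lemma HasSubRpowGrowth.subweibullMoment_lt_top_of_tilted (hf : HasSubRpowGrowth q f) (hq : 0 < q)
    (hint : Integrable (fun x => exp (f x)) μ) {a b : ℝ} (ha : 0 ≤ a) (hab : a < b)
    (hb : subweibullMoment q b (μ.tilted f) < ⊤) : subweibullMoment q a μ < ⊤ := by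
  rcases eq_zero_or_neZero μ with rfl | _
  · simp only [subweibullMoment, lintegral_zero_measure, ENNReal.zero_lt_top]
  have hZ : ENNReal.ofReal (∫ x, exp (f x) ∂μ)⁻¹ ≠ 0 :=
    (ENNReal.ofReal_pos.2 (inv_pos.2 (integral_exp_pos hint))).ne'
  have untilted_lt_top := hf.neg.lintegral_exp_add_lt_top (rpow_lt_rpow ha hab hq) hb
  simp only [lintegral_exp_tilted, add_neg_cancel_left] at untilted_lt_top
  exact ENNReal.lt_top_of_mul_ne_top_right untilted_lt_top.ne hZ

theorem HasSubRpowGrowth.subweibullRadius_tilted (hf : HasSubRpowGrowth q f) (hq : 0 < q)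
    (hint : Integrable (fun x => exp (f x)) μ) :
    subweibullRadius q (μ.tilted f) = subweibullRadius q μ :=
  le_antisymm
    (subweibullRadius_le_of_moment_lt_top fun _ _ ha hab =>
      hf.subweibullMoment_lt_top_of_tilted hq hint ha.le hab)
    (subweibullRadius_le_of_moment_lt_top fun _ _ ha hab =>
      hf.subweibullMoment_tilted_lt_top hq ha.le hab)

theorem tilted_subweibull_general_general (hq : 0 < q) (hf : HasSubRpowGrowth q f)
    (hint : Integrable (fun x => exp (f x)) μ) :
    (∀ lam : ℝ, 0 ≤ lam → ENNReal.ofReal lam < subweibullRadius q μ →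
        subweibullMoment q lam (μ.tilted f) < ⊤) ∧
      (∀ lam : ℝ, subweibullRadius q μ < ENNReal.ofReal lam →
        subweibullMoment q lam (μ.tilted f) = ⊤) := by
  rw [← hf.subweibullRadius_tilted hq hint]
  exact ⟨fun _ => subweibullMoment_lt_top_of_lt_radius hq.le,
    fun _ => subweibullMoment_eq_top_of_radius_lt⟩

end Subweibull

/-- Preservation of subweibull tails under exponential tilting (`q > 1`): if `μ` is
q-subweibull with radius of convergence `R`, then for any tilting parameter `θ` the
tilted measure is q-subweibull with the same radius of convergence `R`: its subweibull
moment is finite for every `0 ≤ λ < R` and infinite for every real `λ > R`. -/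
theorem tilted_subweibull_general (q : ℝ) (hq : 1 < q)
    (μ : Measure ℝ) [IsProbabilityMeasure μ]
    (hne : {lam : ℝ | 0 < lam ∧
      (∫⁻ x, ENNReal.ofReal (Real.exp (lam ^ q * |x| ^ q)) ∂μ) < ⊤}.Nonempty)
    (θ : ℝ) :
    (∀ lam : ℝ, 0 ≤ lam →
        ENNReal.ofReal lam
            < sSup (ENNReal.ofReal '' {lam' : ℝ | 0 < lam' ∧
                (∫⁻ x, ENNReal.ofReal (Real.exp (lam' ^ q * |x| ^ q)) ∂μ) < ⊤}) →
        (∫⁻ z, ENNReal.ofReal (Real.exp (lam ^ q * |z| ^ q))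
            ∂(μ.tilted (fun x => θ * x))) < ⊤) ∧
      (∀ lam : ℝ,
        sSup (ENNReal.ofReal '' {lam' : ℝ | 0 < lam' ∧
            (∫⁻ x, ENNReal.ofReal (Real.exp (lam' ^ q * |x| ^ q)) ∂μ) < ⊤})
          < ENNReal.ofReal lam →
        (∫⁻ z, ENNReal.ofReal (Real.exp (lam ^ q * |z| ^ q))
            ∂(μ.tilted (fun x => θ * x))) = ⊤) := by
  obtain ⟨lam, hlam, hfin⟩ := hne
  have hgrowth : HasSubRpowGrowth q (fun x => θ * x) :=
    hasSubRpowGrowth_of_abs_le_mul_norm hq fun x => (abs_mul θ x).le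
  exact tilted_subweibull_general_general (one_pos.trans hq) hgrowth
    (hgrowth.integrable_exp (by fun_prop) hlam hfin)
end
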